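/- arXiv:1705.05781 — 2 statements merged into one kernel-verified Lean document; each statement's English description precedes it below -/
import Mathlib

section
/- Let L be a finite modular semilattice. The map φ : L → Csub(P(L)) defined by φ(l) = {p ∈ L^ir : p ≤ l} is a well-defined order isomorphism from L onto the family Csub(P(L)) of consistent subspaces of P(L) ordered by inclusion; its inverse ψ is given by ψ(I) = ⋁_{x ∈ I} x for nonempty I (this join exists) and ψ(∅) = min L. -/
/-- The join of `a` and `b` exists (there is a least upper bound of the pair). -/
def JoinExists {α : Type*} [Preorder α] (a b : α) : Prop :=
  ∃ j, IsLUB ({a, b} : Set α) j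

/-- `a` and `b` are incomparable. -/
def Incomp {α : Type*} [Preorder α] (a b : α) : Prop :=
  ¬ a ≤ b ∧ ¬ b ≤ a

/-- A collinear triple: pairwise incomparable elements whose pairwise joins all exist
and coincide. -/
def Collinear3 {α : Type*} [Preorder α] (x y z : α) : Prop :=
  Incomp x y ∧ Incomp y z ∧ Incomp z x ∧
  ∃ j, IsLUB ({x, y} : Set α) j ∧ IsLUB ({y, z} : Set α) j ∧ IsLUB ({z, x} : Set α) j

/-- `l` is ∨-irreducible: `l` is not the minimum element, and whenever `l` is the join
of `a` and `b`, `l = a` or `l = b`. -/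
def JoinIrred {α : Type*} [Preorder α] (l : α) : Prop :=
  (¬ ∀ x, l ≤ x) ∧ ∀ a b, IsLUB ({a, b} : Set α) l → l = a ∨ l = b

/-- A modular semilattice: (existing joins witness that) every principal ideal is a
(modular) lattice, the modular law holds in every principal ideal, and the join of any
three elements exists whenever the three pairwise joins exist. -/
def ModularSemilattice (α : Type*) [SemilatticeInf α] : Prop :=
  (∀ a b : α, (∃ u, a ≤ u ∧ b ≤ u) → JoinExists a b) ∧
  (∀ x a b c : α, a ≤ x → b ≤ x → c ≤ x → a ≤ c →
    ∀ j, IsLUB ({a, b} : Set α) j → IsLUB ({a, b ⊓ c} : Set α) (j ⊓ c)) ∧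
  (∀ x y z : α, JoinExists x y → JoinExists y z → JoinExists z x →
    ∃ j, IsLUB ({x, y, z} : Set α) j)
/-- A consistent subspace: a downward-closed subset, no two of whose elements are
inconsistent, that is closed under the collinearity relation. -/
def IsCSub {P : Type*} (le : P → P → Prop) (ic : P → P → Prop)
    (C : P → P → P → Prop) (X : Set P) : Prop :=
  (∀ p q, le p q → q ∈ X → p ∈ X) ∧
  (∀ p q, p ∈ X → q ∈ X → ¬ ic p q) ∧
  (∀ p q r, p ∈ X → q ∈ X → C p q r → r ∈ X)
/-- The poset of ∨-irreducible elements of `L`. -/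
abbrev Irr (L : Type*) [SemilatticeInf L] := {l : L // JoinIrred l}

/-- `φ(l) = {p ∈ Lⁱʳ : p ≤ l}`. -/
def phiMap (L : Type*) [SemilatticeInf L] (l : L) : Set (Irr L) :=
  {p : Irr L | (p : L) ≤ l}

/-- The induced order on `Lⁱʳ`. -/
def indLE (L : Type*) [SemilatticeInf L] : Irr L → Irr L → Prop :=
  fun p q => p ≤ q

/-- The induced inconsistency relation on `Lⁱʳ`: `p ⌣ q` iff `p ∨ q` does not exist. -/
def indIC (L : Type*) [SemilatticeInf L] : Irr L → Irr L → Prop :=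
  fun p q => ¬ JoinExists (p : L) (q : L)

/-- The induced collinearity relation on `Lⁱʳ`. -/
def indC (L : Type*) [SemilatticeInf L] : Irr L → Irr L → Irr L → Prop :=
  fun p q r => Collinear3 (p : L) (q : L) (r : L)

/-- If `a` is minimal with `p ≤ a ⊔ b`, then `a` lies below `p ⊔ b`. -/
theorem le_sup_of_minimal_le_sup {M : Type*} [Lattice M] [IsModularLattice M] {p a b : M}
    (h : p ≤ a ⊔ b) (hmin : ∀ a' < a, ¬ p ≤ a' ⊔ b) : a ≤ p ⊔ b := by
  by_contra hle
  refine hmin (a ⊓ (p ⊔ b)) (inf_lt_left.2 hle) ?_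
  calc p ≤ (b ⊔ a) ⊓ (p ⊔ b) := le_inf (by rwa [sup_comm]) le_sup_left
    _ ≤ b ⊔ a ⊓ (p ⊔ b) := IsModularLattice.sup_inf_le_assoc_of_le a le_sup_right
    _ = a ⊓ (p ⊔ b) ⊔ b := sup_comm _ _

/-- If `p` is join-irreducible and `a` is minimal with `p ≤ a ⊔ b`, where `p` is not below `b`,
then `a` is join-irreducible. -/
theorem SupIrred.of_minimal_le_sup {M : Type*} [Lattice M] [IsModularLattice M] {p a b : M}
    (hp : SupIrred p) (h : p ≤ a ⊔ b) (hb : ¬ p ≤ b) (hmin : ∀ a' < a, ¬ p ≤ a' ⊔ b) :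
    SupIrred a := by
  have hab : a ≤ p ⊔ b := le_sup_of_minimal_le_sup h hmin
  refine ⟨fun ha => hb (h.trans (sup_le ((ha inf_le_left).trans inf_le_right) le_rfl)), ?_⟩
  intro c d hcd
  by_contra! hne
  have hc : c < a := lt_of_le_of_ne (hcd ▸ le_sup_left) hne.1
  have hd : d < a := lt_of_le_of_ne (hcd ▸ le_sup_right) hne.2
  have key : ∀ e ≤ a, e ≤ b ⊔ p ⊓ (e ⊔ b) := fun e he =>
    (le_inf (by rw [sup_comm]; exact he.trans hab) le_sup_left).trans
      (IsModularLattice.sup_inf_le_assoc_of_le p (le_sup_right : b ≤ e ⊔ b))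
  set s := p ⊓ (c ⊔ b) ⊔ p ⊓ (d ⊔ b)
  have hsp : s ≤ p := sup_le inf_le_left inf_le_left
  have hps : p ≤ s ⊔ b := by
    refine h.trans (sup_le (hcd ▸ sup_le ?_ ?_) le_sup_right)
    · exact (key c hc.le).trans (sup_le le_sup_right (le_sup_left.trans le_sup_left))
    · exact (key d hd.le).trans (sup_le le_sup_right (le_sup_right.trans le_sup_left))
  have hsp' : s = p := by
    refine le_antisymm hsp ?_
    calc p ≤ (s ⊔ b) ⊓ p := le_inf hps le_rfl
      _ ≤ s ⊔ b ⊓ p := IsModularLattice.sup_inf_le_assoc_of_le b hsp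
      _ ≤ s := sup_le le_rfl ((le_inf inf_le_right (inf_le_left.trans le_sup_right)).trans
          le_sup_left)
  rcases hp.2 hsp' with h' | h'
  · exact hmin c hc (inf_eq_left.1 h')
  · exact hmin d hd (inf_eq_left.1 h')

/-- In a finite modular lattice, a join-irreducible element below `a ⊔ b` but below neither `a`
nor `b` is collinear with join-irreducible elements `q ≤ a` and `r ≤ b`. -/
theorem SupIrred.exists_collinear {M : Type*} [Lattice M] [IsModularLattice M] [Finite M]
    {p a b : M} (hp : SupIrred p) (h : p ≤ a ⊔ b) (ha : ¬ p ≤ a) (hb : ¬ p ≤ b) :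
    ∃ q r, SupIrred q ∧ SupIrred r ∧ q ≤ a ∧ r ≤ b ∧ Collinear3 q r p := by
  obtain ⟨⟨q, r⟩, ⟨hq, hr⟩, hqr, hmin⟩ :=
    exists_minimal_le_of_wellFoundedLT (fun x : M × M => p ≤ x.1 ⊔ x.2) (a, b) h
  simp only at hq hr hqr
  have hpq : ¬ p ≤ q := fun h' => ha (h'.trans hq)
  have hpr : ¬ p ≤ r := fun h' => hb (h'.trans hr)
  have hminq : ∀ q' < q, ¬ p ≤ q' ⊔ r := fun q' hlt hle =>
    hlt.not_ge (hmin (y := (q', r)) hle ⟨hlt.le, le_rfl⟩).1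
  have hminr : ∀ r' < r, ¬ p ≤ r' ⊔ q := fun r' hlt hle =>
    hlt.not_ge (hmin (y := (q, r')) (by rwa [sup_comm] at hle) ⟨le_rfl, hlt.le⟩).2
  have hrq : p ≤ r ⊔ q := by rwa [sup_comm] at hqr
  have hqle : q ≤ p ⊔ r := le_sup_of_minimal_le_sup hqr hminq
  have hrle : r ≤ p ⊔ q := le_sup_of_minimal_le_sup hrq hminr
  have hnot : ∀ s t, p ≤ s ⊔ t → ¬ p ≤ s → ¬ p ≤ t → t ≤ p ⊔ s → ¬ s ≤ p := by
    intro s t hst hs ht hts hsp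
    rcases hp.2 (le_antisymm (sup_le hsp (hts.trans (sup_le le_rfl hsp))) hst) with h' | h'
    · exact hs h'.ge
    · exact ht h'.ge
  refine ⟨q, r, hp.of_minimal_le_sup hqr hpr hminq, hp.of_minimal_le_sup hrq hpq hminr, hq, hr,
    ⟨fun h' => hpr (hqr.trans (sup_le h' le_rfl)), fun h' => hpq (hqr.trans (sup_le le_rfl h'))⟩,
    ⟨hnot r q hrq hpr hpq hqle, hpr⟩, ⟨hpq, hnot q r hqr hpq hpr hrle⟩, q ⊔ r, isLUB_pair, ?_, ?_⟩
  · rw [show q ⊔ r = r ⊔ p from le_antisymm (sup_le (by rwa [sup_comm]) le_sup_left)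
      (sup_le le_sup_right hqr)]
    exact isLUB_pair
  · rw [show q ⊔ r = p ⊔ q from le_antisymm (sup_le le_sup_right hrle) (sup_le hqr le_sup_left)]
    exact isLUB_pair

/-- Least upper bounds of pairs in a principal ideal agree with those in the whole order. -/
theorem isLUB_pair_coe_iff {L : Type*} [SemilatticeInf L] {u : L} {a b j : Set.Iic u} :
    IsLUB ({(a : L), (b : L)} : Set L) (j : L) ↔ IsLUB ({a, b} : Set (Set.Iic u)) j := by
  simp only [isLUB_iff_le_iff, mem_upperBounds, Set.mem_insert_iff, Set.mem_singleton_iff,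
    forall_eq_or_imp, forall_eq]
  refine ⟨fun h x => h x, fun h x => ⟨fun hx => ?_, fun hx => ?_⟩⟩
  · obtain ⟨h1, h2⟩ := (h j).1 le_rfl
    exact ⟨le_trans (show (a : L) ≤ j from h1) hx, le_trans (show (b : L) ≤ j from h2) hx⟩
  · have := (h ⟨x ⊓ u, inf_le_right⟩).2 ⟨le_inf hx.1 a.2, le_inf hx.2 b.2⟩
    exact le_trans (show (j : L) ≤ x ⊓ u from this) inf_le_left

/-- The lattice structure on a principal ideal of a modular semilattice. -/
noncomputable abbrev ModularSemilattice.latticeIic {L : Type*} [SemilatticeInf L]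
    (hL : ModularSemilattice L) (u : L) : Lattice (Set.Iic u) :=
  have hj : ∀ a b : Set.Iic u, ∃ j : Set.Iic u, IsLUB ({a, b} : Set (Set.Iic u)) j := by
    intro a b
    obtain ⟨j, hj⟩ := hL.1 a b ⟨u, a.2, b.2⟩
    have hju : j ≤ u := hj.2 (by rintro x (rfl | rfl); exacts [a.2, b.2])
    exact ⟨⟨j, hju⟩, isLUB_pair_coe_iff.1 hj⟩
  { (inferInstance : SemilatticeInf (Set.Iic u)) with
    sup := fun a b => (hj a b).choose
    le_sup_left := fun a b => (hj a b).choose_spec.1 (Set.mem_insert _ _)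
    le_sup_right := fun a b => (hj a b).choose_spec.1 (Set.mem_insert_of_mem _ rfl)
    sup_le := fun a b _ ha hb => (hj a b).choose_spec.2 (by rintro x (rfl | rfl) <;> assumption) }

theorem ModularSemilattice.isModularLattice_Iic {L : Type*} [SemilatticeInf L]
    (hL : ModularSemilattice L) (u : L) :
    letI := hL.latticeIic u
    IsModularLattice (Set.Iic u) := by
  let := hL.latticeIic u
  refine ⟨fun {a} b {c} hac => ?_⟩
  have h := hL.2.1 u a b c a.2 b.2 c.2 hac _ (isLUB_pair_coe_iff.2 (isLUB_pair (a := a) (b := b)))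
  exact (isLUB_pair_coe_iff (a := a) (b := b ⊓ c) (j := (a ⊔ b) ⊓ c)).1 h |>.unique isLUB_pair |>.le

theorem ModularSemilattice.supIrred_Iic_iff {L : Type*} [SemilatticeInf L]
    (hL : ModularSemilattice L) {u : L} {p : Set.Iic u} :
    letI := hL.latticeIic u
    SupIrred p ↔ JoinIrred (p : L) := by
  let := hL.latticeIic u
  refine and_congr (not_congr ⟨fun h x => ?_, fun h x _ => h x⟩) ⟨fun h a b hab => ?_, ?_⟩
  · have hx : (p : L) ≤ x ⊓ p :=
      h (b := ⟨x ⊓ p, inf_le_right.trans p.2⟩) (show x ⊓ (p : L) ≤ p from inf_le_right)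
    exact hx.trans inf_le_left
  · have ha : a ≤ u := (hab.1 (Set.mem_insert _ _)).trans p.2
    have hb : b ≤ u := (hab.1 (Set.mem_insert_of_mem _ rfl)).trans p.2
    have hab' : IsLUB {(⟨a, ha⟩ : Set.Iic u), ⟨b, hb⟩} p := isLUB_pair_coe_iff.1 hab
    exact (h (isLUB_pair.unique hab')).imp (fun h' => congrArg Subtype.val h'.symm)
      (fun h' => congrArg Subtype.val h'.symm)
  · intro h a b hab
    exact (h a b (isLUB_pair_coe_iff.2 (hab ▸ isLUB_pair))).imp
      (fun h' => Subtype.ext h'.symm) (fun h' => Subtype.ext h'.symm)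

/-- A join-irreducible element below a join `a ∨ b` but below neither `a` nor `b` is collinear
with join-irreducible elements `q ≤ a` and `r ≤ b`. -/
theorem ModularSemilattice.exists_collinear {L : Type*} [SemilatticeInf L] [Finite L]
    (hL : ModularSemilattice L) {p a b j : L} (hp : JoinIrred p) (hj : IsLUB ({a, b} : Set L) j)
    (h : p ≤ j) (ha : ¬ p ≤ a) (hb : ¬ p ≤ b) :
    ∃ q r, JoinIrred q ∧ JoinIrred r ∧ q ≤ a ∧ r ≤ b ∧ Collinear3 q r p := by
  let := hL.latticeIic j
  have := hL.isModularLattice_Iic j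
  let a' : Set.Iic j := ⟨a, hj.1 (Set.mem_insert _ _)⟩
  let b' : Set.Iic j := ⟨b, hj.1 (Set.mem_insert_of_mem _ rfl)⟩
  let p' : Set.Iic j := ⟨p, h⟩
  let j' : Set.Iic j := ⟨j, le_rfl⟩
  have hj' : IsLUB {a', b'} j' := isLUB_pair_coe_iff.1 hj
  have hp' : SupIrred p' := hL.supIrred_Iic_iff.2 hp
  have hle : p' ≤ a' ⊔ b' := by
    rw [isLUB_pair.unique hj']
    exact h
  obtain ⟨q, r, hq, hr, hqa, hrb, h1, h2, h3, k, k1, k2, k3⟩ := hp'.exists_collinear hle ha hb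
  exact ⟨q, r, hL.supIrred_Iic_iff.1 hq, hL.supIrred_Iic_iff.1 hr, hqa, hrb, h1, h2, h3, k,
    isLUB_pair_coe_iff.2 k1, isLUB_pair_coe_iff.2 k2, isLUB_pair_coe_iff.2 k3⟩

/-- Every consistent subspace has a join, and contains all join-irreducibles below it. -/
theorem ModularSemilattice.exists_isLUB_phiMap_eq {L : Type*} [SemilatticeInf L] [Finite L]
    [Nonempty L] (hL : ModularSemilattice L) {X : Set (Irr L)}
    (hX : IsCSub (indLE L) (indIC L) (indC L) X) :
    ∃ j : L, IsLUB (Subtype.val '' X) j ∧ phiMap L j = X := by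
  obtain ⟨hdown, hcons, hcol⟩ := hX
  have main : ∀ Y : Set (Irr L), Y.Finite → Y ⊆ X → ∃ l : L, IsLUB (Subtype.val '' Y) l ∧
      phiMap L l ⊆ X ∧ ∀ p ∈ X, JoinExists l (p : L) := by
    intro Y hY
    induction Y, hY using Set.Finite.induction_on with
    | empty =>
      intro _
      obtain ⟨m, -, hm⟩ :=
        exists_minimal_le_of_wellFoundedLT (fun _ : L => True) (Classical.arbitrary L) trivial
      have hm' : ∀ x, m ≤ x := fun x => (hm.2 trivial (inf_le_left : m ⊓ x ≤ m)).trans inf_le_right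
      refine ⟨m, by simpa [isLUB_empty_iff, IsBot] using hm', fun p hp => ?_, fun p _ => ?_⟩
      · exact absurd (fun x => le_trans hp (hm' x)) p.2.1
      · exact hL.1 _ _ ⟨p, hm' _, le_rfl⟩
    | @insert q Y _ _ ih =>
      intro hYX
      obtain ⟨l, hl, hlX, hlj⟩ := ih ((Set.subset_insert _ _).trans hYX)
      have hq : q ∈ X := hYX (Set.mem_insert _ _)
      obtain ⟨j, hj⟩ := hlj q hq
      refine ⟨j, ?_, fun p hp => ?_, fun p hp => ?_⟩
      · rw [Set.image_insert_eq, isLUB_iff_le_iff]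
        intro b
        rw [isLUB_iff_le_iff.1 hj, upperBounds_insert, upperBounds_insert, upperBounds_singleton,
          ← hl.upperBounds_eq, Set.inter_comm]
      · by_cases hpl : (p : L) ≤ l
        · exact hlX hpl
        by_cases hpq : (p : L) ≤ q
        · exact hdown p q hpq hq
        obtain ⟨s, t, hs, ht, hsl, htq, hst⟩ := hL.exists_collinear p.2 hj hp hpl hpq
        exact hcol ⟨s, hs⟩ ⟨t, ht⟩ p (hlX hsl) (hdown _ q htq hq) hst
      · obtain ⟨k, hk⟩ := hL.2.2 l q p (hlj q hq) (not_not.1 (hcons q p hq hp))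
          (by simpa only [JoinExists, Set.pair_comm] using hlj p hp)
        refine hL.1 _ _ ⟨k, hj.2 ?_, hk.1 (by simp)⟩
        rintro x (rfl | rfl) <;> exact hk.1 (by simp)
  obtain ⟨j, hj, hjX, -⟩ := main X X.toFinite subset_rfl
  exact ⟨j, hj, hjX.antisymm fun p hp => hj.1 (Set.mem_image_of_mem _ hp)⟩

/-- In a finite semilattice, elements are determined by the join-irreducibles below them. -/
theorem le_of_phiMap_subset {L : Type*} [SemilatticeInf L] [Finite L] {l l' : L}
    (h : phiMap L l ⊆ phiMap L l') : l ≤ l' := by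
  induction l using WellFoundedLT.induction with
  | ind l ih =>
    by_cases hmin : ∀ x, l ≤ x
    · exact hmin l'
    by_cases hirr : JoinIrred l
    · exact h (show (⟨l, hirr⟩ : Irr L) ∈ phiMap L l from le_rfl)
    simp only [JoinIrred, hmin, not_false_eq_true, true_and, not_forall, not_or] at hirr
    obtain ⟨a, b, hab, ha, hb⟩ := hirr
    have hsub : ∀ c ∈ ({a, b} : Set L), l ≠ c → c ≤ l' := fun c hc hne =>
      ih c (lt_of_le_of_ne (hab.1 hc) hne.symm) fun p hp => h (le_trans hp (hab.1 hc))
    refine hab.2 ?_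
    rintro x (rfl | rfl)
    · exact hsub _ (by simp) ha
    · exact hsub _ (by simp) hb

theorem ModularSemilattice.isCSub_phiMap {L : Type*} [SemilatticeInf L]
    (hL : ModularSemilattice L) (l : L) :
    IsCSub (indLE L) (indIC L) (indC L) (phiMap L l) := by
  refine ⟨fun p q hpq hq => ?_, fun p q hp hq hic => hic (hL.1 _ _ ⟨l, hp, hq⟩), ?_⟩
  · exact le_trans (show (p : L) ≤ q from hpq) hq
  · rintro p q r hp hq ⟨-, -, -, j, hpq, hqr, -⟩
    refine (hqr.1 (by simp)).trans (hpq.2 ?_)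
    rintro x (rfl | rfl) <;> assumption

/-- For a finite modular semilattice `L`, `φ(l) = {p ∈ Lⁱʳ : p ≤ l}` is an order
isomorphism from `L` onto the family of consistent subspaces of `P(L)` ordered by
inclusion; its inverse `ψ` is given by the join for nonempty subspaces and by
`min L` for the empty subspace. -/
theorem stmt1 (L : Type*) [SemilatticeInf L] [Fintype L] [Nonempty L]
    (hL : ModularSemilattice L) :
    (∀ l : L, IsCSub (indLE L) (indIC L) (indC L) (phiMap L l)) ∧
    (∀ l l' : L, l ≤ l' ↔ phiMap L l ⊆ phiMap L l') ∧
    (∀ X : Set (Irr L), IsCSub (indLE L) (indIC L) (indC L) X →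
      ∃ l : L, phiMap L l = X) ∧
    (∀ X : Set (Irr L), IsCSub (indLE L) (indIC L) (indC L) X → X.Nonempty →
      ∃ j : L, IsLUB (Subtype.val '' X) j ∧ phiMap L j = X) ∧
    (∃ m : L, (∀ x : L, m ≤ x) ∧ phiMap L m = ∅) := by
  refine ⟨hL.isCSub_phiMap, fun l l' => ⟨fun h p hp => le_trans hp h, le_of_phiMap_subset⟩,
    fun X hX => (hL.exists_isLUB_phiMap_eq hX).imp fun _ h => h.2,
    fun X hX _ => hL.exists_isLUB_phiMap_eq hX, ?_⟩
  obtain ⟨m, hm, hm'⟩ := hL.exists_isLUB_phiMap_eq (X := ∅) ⟨by simp, by simp, by simp⟩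
  exact ⟨m, by simpa [IsBot] using hm, hm'⟩
end

section
/- Let L be a finite semilattice and B a (∧,∨)-closed subset of L^n. Then the number of ∨-irreducible elements of the semilattice B is at most n times the number of ∨-irreducible elements of L. -/
/-- `j` is the least upper bound of `a` and `b` within the subset `B`. -/
def IsLUBwithin {α : Type*} [Preorder α] (B : Set α) (a b j : α) : Prop :=
  j ∈ B ∧ a ≤ j ∧ b ≤ j ∧ ∀ u ∈ B, a ≤ u → b ≤ u → j ≤ u

/-- The join of `a` and `b` exists in the semilattice `B`. -/
def JoinExistsIn {α : Type*} [Preorder α] (B : Set α) (a b : α) : Prop :=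
  ∃ j, IsLUBwithin B a b j

/-- `l` is a ∨-irreducible element of the semilattice `B`: `l ∈ B`, `l` is not the
minimum element of `B`, and whenever `l` is the join (within `B`) of `a, b ∈ B`,
`l = a` or `l = b`. -/
def JoinIrredIn {α : Type*} [Preorder α] (B : Set α) (l : α) : Prop :=
  l ∈ B ∧ (¬ ∀ x ∈ B, l ≤ x) ∧
  ∀ a b, a ∈ B → b ∈ B → IsLUBwithin B a b l → l = a ∨ l = b

/-- `B` is (∧,∨)-closed: closed under meets and under those joins that exist. -/
def WedgeVeeClosed {α : Type*} [SemilatticeInf α] (B : Set α) : Prop :=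
  (∀ a ∈ B, ∀ b ∈ B, a ⊓ b ∈ B) ∧
  (∀ a ∈ B, ∀ b ∈ B, ∀ j, IsLUB ({a, b} : Set α) j → j ∈ B)

/-- A collinear triple in the semilattice `B`: pairwise incomparable, all pairwise
joins exist in `B` and coincide. -/
def CollinearIn {α : Type*} [Preorder α] (B : Set α) (x y z : α) : Prop :=
  Incomp x y ∧ Incomp y z ∧ Incomp z x ∧
  ∃ j, IsLUBwithin B x y j ∧ IsLUBwithin B y z j ∧ IsLUBwithin B z x j

/-- In a finite meet-semilattice, two elements with a common upper bound have a join. -/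
theorem exists_isLUB_pair {α : Type*} [SemilatticeInf α] [Finite α] {a b u : α}
    (ha : a ≤ u) (hb : b ≤ u) : ∃ j, IsLUB ({a, b} : Set α) j := by
  obtain ⟨j, hj⟩ := (Set.toFinite {v : α | a ≤ v ∧ b ≤ v}).exists_minimal ⟨u, ha, hb⟩
  refine ⟨j, ?_, fun v hv => ?_⟩
  · simpa [upperBounds] using hj.prop
  · have hv' : a ≤ v ∧ b ≤ v := by simpa [upperBounds] using hv
    exact (hj.le_of_le ⟨le_inf hj.prop.1 hv'.1, le_inf hj.prop.2 hv'.2⟩ inf_le_left).trans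
      inf_le_right

/-- In a finite partial order, elements are separated by ∨-irreducible elements. -/
theorem exists_joinIrred_le_not_le {α : Type*} [PartialOrder α] [Finite α] {x y : α}
    (h : ¬ x ≤ y) : ∃ l, JoinIrred l ∧ l ≤ x ∧ ¬ l ≤ y := by
  obtain ⟨l, hl⟩ := (Set.toFinite {v : α | v ≤ x ∧ ¬ v ≤ y}).exists_minimal ⟨x, le_rfl, h⟩
  refine ⟨l, ⟨fun hmin => hl.prop.2 (hmin y), fun a b hab => ?_⟩, hl.prop⟩
  have ha : a ≤ l := hab.1 (by simp)
  have hb : b ≤ l := hab.1 (by simp)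
  by_contra! hne
  have key : ∀ c, c ≤ l → l ≠ c → c ≤ y := fun c hc hlc => by
    by_contra hcy
    exact hlc ((hl.le_of_le ⟨hc.trans hl.prop.1, hcy⟩ hc).antisymm hc)
  refine hl.prop.2 (hab.2 ?_)
  simpa [upperBounds] using And.intro (key a ha hne.1) (key b hb hne.2)

/-- A ∨-irreducible element of a (∧,∨)-closed set `B` has a unique lower cover in `B`. -/
theorem JoinIrredIn.exists_isGreatest_lt {α : Type*} [SemilatticeInf α] [Finite α] {B : Set α}
    (hB : WedgeVeeClosed B) {b : α} (hb : JoinIrredIn B b) :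
    ∃ c, IsGreatest {x | x ∈ B ∧ x < b} c := by
  obtain ⟨hbB, hmin, hirr⟩ := hb
  push Not at hmin
  obtain ⟨x, hxB, hbx⟩ := hmin
  obtain ⟨c, hc⟩ := (Set.toFinite {x | x ∈ B ∧ x < b}).exists_maximal
    ⟨b ⊓ x, hB.1 b hbB x hxB, inf_lt_left.2 hbx⟩
  refine ⟨c, hc.prop, fun y hy => ?_⟩
  obtain ⟨j, hj⟩ := exists_isLUB_pair hc.prop.2.le hy.2.le
  have hcj : c ≤ j := hj.1 (by simp)
  have hyj : y ≤ j := hj.1 (by simp)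
  have hleast : ∀ u, c ≤ u → y ≤ u → j ≤ u := fun u hcu hyu =>
    hj.2 (by simpa [upperBounds] using And.intro hcu hyu)
  have hjb : j < b := by
    refine (hleast b hc.prop.2.le hy.2.le).lt_of_ne ?_
    rintro rfl
    rcases hirr c y hc.prop.1 hy.1 ⟨hbB, hcj, hyj, fun u _ => hleast u⟩ with h | h
    · exact hc.prop.2.ne h.symm
    · exact hy.2.ne h.symm
  exact hyj.trans (hc.le_of_ge ⟨hB.2 c hc.prop.1 y hy.1 j hj, hjb⟩ hcj)

/-- A ∨-irreducible element of a (∧,∨)-closed subset `B` of a power of `L` is the least element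
of `B` having some coordinate above some ∨-irreducible element of `L`. -/
theorem JoinIrredIn.exists_isLeast_le_apply {ι L : Type*} [Finite ι] [SemilatticeInf L] [Finite L]
    {B : Set (ι → L)} (hB : WedgeVeeClosed B) {b : ι → L} (hb : JoinIrredIn B b) :
    ∃ p : ι × L, JoinIrred p.2 ∧ IsLeast {c | c ∈ B ∧ p.2 ≤ c p.1} b := by
  obtain ⟨m, hm, hgreatest⟩ := hb.exists_isGreatest_lt hB
  obtain ⟨i, hi⟩ : ∃ i, ¬ b i ≤ m i := by simpa [Pi.le_def] using hm.2.not_ge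
  obtain ⟨l, hl, hlb, hlm⟩ := exists_joinIrred_le_not_le hi
  refine ⟨(i, l), hl, ⟨hb.1, hlb⟩, fun c hc => ?_⟩
  by_contra hbc
  exact hlm ((le_inf hlb hc.2).trans
    (hgreatest ⟨hB.1 b hb.1 c hc.1, inf_lt_left.2 hbc⟩ i))

/-- For a (∧,∨)-closed subset `B` of the product `Lⁿ` of a finite semilattice `L`,
the number of ∨-irreducible elements of `B` is at most `n` times the number of
∨-irreducible elements of `L`. -/
theorem stmt9 (L : Type*) [SemilatticeInf L] [Fintype L] (n : ℕ)
    (B : Set (Fin n → L)) (hB : WedgeVeeClosed B) :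
    {b : Fin n → L | JoinIrredIn B b}.ncard ≤ n * {l : L | JoinIrred l}.ncard := by
  rcases {b : Fin n → L | JoinIrredIn B b}.eq_empty_or_nonempty with h | ⟨b₀, hb₀⟩
  · simp [h]
  have : Nonempty (Fin n × L) := (hb₀.exists_isLeast_le_apply hB).nonempty
  choose! f hf using fun (b : Fin n → L) (hb : JoinIrredIn B b) => hb.exists_isLeast_le_apply hB
  calc {b : Fin n → L | JoinIrredIn B b}.ncard
      ≤ ((Set.univ : Set (Fin n)) ×ˢ {l : L | JoinIrred l}).ncard :=
        Set.ncard_le_ncard_of_injOn f (fun b hb => ⟨Set.mem_univ _, (hf b hb).1⟩)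
          (fun b hb c hc h => (hf b hb).2.unique (h ▸ (hf c hc).2)) (Set.toFinite _)
    _ = n * {l : L | JoinIrred l}.ncard := by simp [Set.ncard_prod, Set.ncard_univ]
end
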